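/- Let n ≥ 1 and define the matrix B : Matrix (Fin n) (Fin n) ℝ by B(i,j) = 1/(2i + 2j + 3), where i, j ∈ {0, 1, ..., n-1} are 0-indexed (so the first row is 1/3, 1/5, 1/7, ...). Then B is invertible and the sum of all entries of B⁻¹ equals 2n² + n. -/

import Mathlib

/-- The Hilbert-type matrix with entries `1/(2i+2j+3)` (0-indexed). -/
noncomputable def hilbertShifted (n : ℕ) : Matrix (Fin n) (Fin n) ℝ :=
  Matrix.of fun i j => 1 / (2 * ((i : ℕ) : ℝ) + 2 * ((j : ℕ) : ℝ) + 3)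

/-- Nodes. -/
noncomputable def hsX (n : ℕ) (i : Fin n) : ℝ := 2 * ((i : ℕ) : ℝ) + 3 / 2

lemma hsX_pos (n : ℕ) (i : Fin n) : 0 < hsX n i := by unfold hsX; positivity

lemma hsX_inj (n : ℕ) : Function.Injective (hsX n) := by
  intro i j h
  unfold hsX at h
  have : ((i : ℕ) : ℝ) = ((j : ℕ) : ℝ) := by linarith
  exact Fin.ext (by exact_mod_cast this)

lemma hsX_sum (n : ℕ) : 2 * ∑ i, hsX n i = 2 * (n : ℝ) ^ 2 + n := by
  unfold hsX
  rw [Fin.sum_univ_eq_sum_range (fun i : ℕ => 2 * (i : ℝ) + 3 / 2) n]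
  induction n with
  | zero => simp
  | succ k ih => rw [Finset.sum_range_succ, mul_add, ih]; push_cast; ring

lemma hs_mulVec (n : ℕ) (u : Fin n → ℝ) (i : Fin n) :
    (hilbertShifted n).mulVec u i = ∑ j, (hsX n i - (-hsX n j))⁻¹ * u j := by
  simp only [Matrix.mulVec, dotProduct, hilbertShifted, Matrix.of_apply, hsX]
  refine Finset.sum_congr rfl fun j _ => ?_
  rw [one_div]
  congr 2
  ring

lemma hs_ne (n : ℕ) (i : Fin n) : ∀ j ∈ (Finset.univ : Finset (Fin n)), hsX n i ≠ -hsX n j := by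
  intro j _ h
  have := hsX_pos n i
  have := hsX_pos n j
  linarith

lemma hs_injOn (n : ℕ) :
    Set.InjOn (fun j => -hsX n j) ((Finset.univ : Finset (Fin n)) : Set (Fin n)) := by
  intro i _ j _ h
  exact hsX_inj n (neg_injective h)

open Lagrange in
lemma hs_isUnit (n : ℕ) : IsUnit (hilbertShifted n) := by
  rw [← Matrix.mulVec_injective_iff_isUnit]
  have key : ∀ u, (hilbertShifted n).mulVec u = 0 → u = 0 := by
    intro u hu
    set v : Fin n → ℝ := fun j => -hsX n j with hv
    set r : Fin n → ℝ := fun j => u j / nodalWeight Finset.univ v j with hr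
    have hq : interpolate Finset.univ v r = 0 := by
      refine Polynomial.eq_zero_of_degree_lt_of_eval_index_eq_zero (v := hsX n) Finset.univ
        ((hsX_inj n).injOn) (degree_interpolate_lt r (hs_injOn n)) ?_
      intro i _
      rw [eval_interpolate_not_at_node r (hs_ne n i)]
      have h0 : ∑ j, nodalWeight Finset.univ v j * (hsX n i - v j)⁻¹ * r j = 0 := by
        have := hs_mulVec n u i
        rw [hu] at this
        rw [← Pi.zero_apply (M := fun _ : Fin n => ℝ) i, this]
        refine Finset.sum_congr rfl fun j hj => ?_
        have := nodalWeight_ne_zero (hs_injOn n) hj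
        rw [hr]
        change nodalWeight Finset.univ v j ≠ 0 at this
        field_simp
        try simp [hv]
      rw [h0, mul_zero]
    funext j
    have h1 := eval_interpolate_at_node r (hs_injOn n) (Finset.mem_univ j)
    rw [hq] at h1
    have h2 := nodalWeight_ne_zero (hs_injOn n) (Finset.mem_univ j)
    have h3 : u j / nodalWeight Finset.univ v j = 0 := by
      simpa [hr] using h1.symm
    rcases div_eq_zero_iff.1 h3 with h | h
    · simpa using h
    · exact absurd h h2
  intro a b hab
  have := key (a - b) (by rw [Matrix.mulVec_sub]; exact sub_eq_zero.2 hab)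
  exact sub_eq_zero.1 this

open Lagrange Polynomial in
lemma hs_exists (n : ℕ) (hn : 1 ≤ n) : ∃ w : Fin n → ℝ,
    (hilbertShifted n).mulVec w = 1 ∧ ∑ i, w i = 2 * (n : ℝ) ^ 2 + n := by
  set v : Fin n → ℝ := fun j => -hsX n j with hv
  set f : ℝ[X] := nodal Finset.univ v - nodal Finset.univ (hsX n) with hf
  have hdeg : f.degree < (Finset.univ : Finset (Fin n)).card := by
    rw [← degree_nodal (R := ℝ) (v := v)]
    refine degree_sub_lt_left ?_ nodal_ne_zero ?_
    · rw [degree_nodal, degree_nodal]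
    · rw [nodal_monic.leadingCoeff, nodal_monic.leadingCoeff]
  refine ⟨fun j => nodalWeight Finset.univ v j * f.eval (v j), ?_, ?_⟩
  · funext i
    rw [hs_mulVec]
    have h1 := eval_interpolate_not_at_node (fun j => f.eval (v j)) (hs_ne n i)
    have h2 := eq_interpolate (hs_injOn n) hdeg
    change f = interpolate Finset.univ v (fun j => f.eval (v j)) at h2
    change eval (hsX n i) (interpolate Finset.univ v (fun j => f.eval (v j))) =
      eval (hsX n i) (nodal Finset.univ v) * _ at h1
    rw [← h2] at h1
    have h3 : eval (hsX n i) f = eval (hsX n i) (nodal Finset.univ v) := by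
      rw [hf, eval_sub, eval_nodal_at_node (Finset.mem_univ i), sub_zero]
    have h4 : eval (hsX n i) (nodal Finset.univ v) ≠ 0 :=
      eval_nodal_not_at_node (hs_ne n i)
    rw [h3] at h1
    have h5 := mul_left_cancel₀ h4 ((mul_one _).trans h1)
    rw [Pi.one_apply, h5]
    refine Finset.sum_congr rfl fun j _ => ?_
    ring
  · have h1 := coeff_eq_sum (hs_injOn n) hdeg
    have hc : 0 < (Finset.univ : Finset (Fin n)).card := by rw [Finset.card_fin]; omega
    rw [hf, coeff_sub, nodal_eq, nodal_eq, prod_X_sub_C_coeff_card_pred _ _ hc,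
      prod_X_sub_C_coeff_card_pred _ _ hc, ← nodal_eq, ← nodal_eq, ← hf] at h1
    rw [← hsX_sum]
    have h2 : -∑ i, v i - -∑ i, hsX n i = 2 * ∑ i, hsX n i := by
      simp only [hv, Finset.sum_neg_distrib]; ring
    rw [← h2, h1]
    refine Finset.sum_congr rfl fun j _ => ?_
    simp only [nodalWeight]
    rw [Finset.prod_inv_distrib, div_eq_mul_inv, mul_comm]

/-- The matrix `B(i,j) = 1/(2i+2j+3)` (0-indexed) is invertible and the sum of all
entries of its inverse equals `2n² + n`. -/
theorem hilbertShifted_inverse_entry_sum (n : ℕ) (hn : 1 ≤ n) :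
    IsUnit (hilbertShifted n) ∧
      ∑ i, ∑ j, (hilbertShifted n)⁻¹ i j = 2 * (n : ℝ) ^ 2 + n := by
  refine ⟨hs_isUnit n, ?_⟩
  obtain ⟨w, hw, hs⟩ := hs_exists n hn
  have hdet := (Matrix.isUnit_iff_isUnit_det _).1 (hs_isUnit n)
  have h : (hilbertShifted n)⁻¹.mulVec 1 = w := by
    rw [← hw, Matrix.mulVec_mulVec, Matrix.nonsing_inv_mul _ hdet, Matrix.one_mulVec]
  rw [← hs, ← h]
  simp [Matrix.mulVec, dotProduct]
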